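/- arXiv:2512.18744 — 8 statements merged into one kernel-verified Lean document; each statement's English description precedes it below -/
import Mathlib

section
/- Let N ≥ 1 be an integer, let ℏ be a positive real number, let Λ ∈ ℂ with Λ ≠ 0, and fix L ∈ ℂ with exp(L) = ℏ/Λ. Let τ_1,…,τ_N ∈ ℂ and set t(λ) = ∏_{k=1}^N (λ − τ_k). Suppose K : ℂ → ℂ satisfies K(λ − iℏ) = K(λ) − Λ^{2N} · K(λ + iℏ)/(t(λ)·t(λ + iℏ)) for every λ ∈ ℂ with t(λ)·t(λ + iℏ) ≠ 0. Define Q⁺(λ) = exp(iNλL/ℏ − Nπλ/ℏ) · K(λ) · ∏_{k=1}^N Γ(1 − i(λ − τ_k)/ℏ)⁻¹, where Γ is the complex Gamma function. Then for every λ ∈ ℂ such that t(λ) ≠ 0, t(λ + iℏ) ≠ 0, and i(λ − τ_k)/ℏ is not an integer for any k, one has the Baxter equation t(λ)·Q⁺(λ) = Λ^N·( i^N·Q⁺(λ + iℏ) + i^{−N}·Q⁺(λ − iℏ) ). -/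
/-!
The prefactor `P` multiplying `K` in `Q⁺` is a product over the sites. The equations
`1/Γ(s) = s/Γ(s + 1)` and `exp (L + iπ) = -ℏ/Λ` give it the first-order recursion
`P(λ - iℏ) = (i/Λ)^N t(λ) P(λ)`. Applied at `λ` and at `λ + iℏ`, this recursion turns the difference
equation for `K`, multiplied by `t(λ) P(λ)`, into the Baxter equation.
-/

theorem mul_eq_add_of_first_order_recursion {G F : Type*} [AddGroup G] [Field F]
    {P K t : G → F} {a b : F} {x s : G} (ha : a ≠ 0)
    (hP : ∀ y, P (y - s) = a * t y * P y) (h₀ : t x ≠ 0) (h₁ : t (x + s) ≠ 0)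
    (hK : K (x - s) = K x - b * K (x + s) / (t x * t (x + s))) :
    t x * (P x * K x) =
      a * b * (P (x + s) * K (x + s)) + a⁻¹ * (P (x - s) * K (x - s)) := by
  have hPx : P x = a * t (x + s) * P (x + s) := by
    simpa only [add_sub_cancel_right] using hP (x + s)
  rw [hP x, hK, hPx]
  field_simp
  ring

section
open Complex

/-- The contribution of one site, with parameter `τ`, to the factor of Gutzwiller's solution `Q⁺`
that multiplies `K`. Since `Complex.Gamma` is `0` at its poles, the inverse below is the entire
function `1/Γ` everywhere. -/
noncomputable def gutzwillerFactor (ℏ L τ x : ℂ) : ℂ :=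
  exp (I * x * L / ℏ - Real.pi * x / ℏ) * (Gamma (1 - I * (x - τ) / ℏ))⁻¹

theorem gutzwillerFactor_sub_I_mul {ℏ : ℂ} (hℏ : ℏ ≠ 0) (L τ x : ℂ) :
    gutzwillerFactor ℏ L τ (x - I * ℏ) =
      I * exp L / ℏ * (x - τ) * gutzwillerFactor ℏ L τ x := by
  have exp_shift : exp (I * (x - I * ℏ) * L / ℏ - Real.pi * (x - I * ℏ) / ℏ) =
      -exp L * exp (I * x * L / ℏ - Real.pi * x / ℏ) := by
    rw [← exp_add_pi_mul_I, ← exp_add]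
    congr 1
    field_simp
    linear_combination -ℏ * L * I_sq
  have Gamma_shift : (Gamma (1 - I * (x - I * ℏ - τ) / ℏ))⁻¹ =
      -I / ℏ * (x - τ) * (Gamma (1 - I * (x - τ) / ℏ))⁻¹ := by
    have arg_shift : 1 - I * (x - I * ℏ - τ) / ℏ = -I / ℏ * (x - τ) := by
      field_simp
      linear_combination ℏ * I_sq
    have arg : 1 - I * (x - τ) / ℏ = -I / ℏ * (x - τ) + 1 := by ring
    rw [arg_shift, arg, one_div_Gamma_eq_self_mul_one_div_Gamma_add_one]
  rw [gutzwillerFactor, gutzwillerFactor, exp_shift, Gamma_shift]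
  ring

theorem prod_gutzwillerFactor_sub_I_mul {ι : Type*} (S : Finset ι) {ℏ : ℂ} (hℏ : ℏ ≠ 0)
    (L : ℂ) (τ : ι → ℂ) (x : ℂ) :
    ∏ k ∈ S, gutzwillerFactor ℏ L (τ k) (x - I * ℏ) =
      (I * exp L / ℏ) ^ S.card * (∏ k ∈ S, (x - τ k)) *
        ∏ k ∈ S, gutzwillerFactor ℏ L (τ k) x := by
  simp only [gutzwillerFactor_sub_I_mul hℏ, Finset.prod_mul_distrib, Finset.prod_const]

theorem prod_gutzwillerFactor {ι : Type*} (S : Finset ι) (ℏ L : ℂ) (τ : ι → ℂ) (x : ℂ) :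
    ∏ k ∈ S, gutzwillerFactor ℏ L (τ k) x =
      exp (I * S.card * x * L / ℏ - S.card * Real.pi * x / ℏ) *
        ∏ k ∈ S, (Gamma (1 - I * (x - τ k) / ℏ))⁻¹ := by
  simp only [gutzwillerFactor, Finset.prod_mul_distrib, Finset.prod_const, ← exp_nat_mul]
  congr 2
  ring

theorem baxter_solution_Qplus_general {N : ℕ} {ℏ Λ L : ℂ} (hL : exp L = ℏ / Λ)
    {τ : Fin N → ℂ} {t : ℂ → ℂ} (ht : ∀ x, t x = ∏ k, (x - τ k)) {K Q : ℂ → ℂ}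
    (hQ : ∀ x, Q x = exp (I * N * x * L / ℏ - N * Real.pi * x / ℏ) * K x *
      ∏ k, (Gamma (1 - I * (x - τ k) / ℏ))⁻¹)
    {x : ℂ} (h₀ : t x ≠ 0) (h₁ : t (x + I * ℏ) ≠ 0)
    (hK : K (x - I * ℏ) = K x - Λ ^ (2 * N) * K (x + I * ℏ) / (t x * t (x + I * ℏ))) :
    t x * Q x = Λ ^ N * (I ^ N * Q (x + I * ℏ) + I ^ (-(N : ℤ)) * Q (x - I * ℏ)) := by
  obtain ⟨hℏ, hΛ⟩ : ℏ ≠ 0 ∧ Λ ≠ 0 := div_ne_zero_iff.mp (hL ▸ exp_ne_zero L)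
  let P : ℂ → ℂ := fun y ↦ ∏ k, gutzwillerFactor ℏ L (τ k) y
  have hQP (y : ℂ) : Q y = P y * K y := by
    simp only [hQ, P, prod_gutzwillerFactor, Finset.card_fin]
    ring
  have hc : I * exp L / ℏ = I / Λ := by
    rw [hL]
    field_simp
  have hP (y : ℂ) : P (y - I * ℏ) = (I / Λ) ^ N * t y * P y := by
    rw [ht, ← hc]
    simpa only [Finset.card_fin] using prod_gutzwillerFactor_sub_I_mul Finset.univ hℏ L τ y
  have ha : (I / Λ) ^ N ≠ 0 := pow_ne_zero N (div_ne_zero I_ne_zero hΛ)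
  have hab : (I / Λ) ^ N * Λ ^ (2 * N) = Λ ^ N * I ^ N := by
    rw [div_pow, two_mul, pow_add]
    field_simp
  have ha_inv : ((I / Λ) ^ N)⁻¹ = Λ ^ N * I ^ (-(N : ℤ)) := by
    rw [div_pow, inv_div, div_eq_mul_inv, zpow_neg, zpow_natCast]
  rw [hQP, hQP, hQP, mul_eq_add_of_first_order_recursion ha hP h₀ h₁ hK, hab, ha_inv]
  ring

end

/-- The Gutzwiller-type solution `Q⁺` built from a solution `K` of the
auxiliary difference equation solves the Baxter equation of the closed Toda chain. -/
theorem baxter_solution_Qplus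
    (N : ℕ) (hN : 1 ≤ N) (ℏ : ℝ) (hℏ : 0 < ℏ)
    (Λ : ℂ) (hΛ : Λ ≠ 0) (L : ℂ) (hL : Complex.exp L = (ℏ : ℂ) / Λ)
    (τ : Fin N → ℂ) (t : ℂ → ℂ) (ht : ∀ lam : ℂ, t lam = ∏ k, (lam - τ k))
    (K : ℂ → ℂ)
    (hK : ∀ lam : ℂ, t lam * t (lam + Complex.I * (ℏ : ℂ)) ≠ 0 →
      K (lam - Complex.I * (ℏ : ℂ)) =
        K lam - Λ ^ (2 * N) * K (lam + Complex.I * (ℏ : ℂ)) /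
          (t lam * t (lam + Complex.I * (ℏ : ℂ))))
    (Q : ℂ → ℂ)
    (hQ : ∀ lam : ℂ, Q lam =
      Complex.exp (Complex.I * (N : ℂ) * lam * L / (ℏ : ℂ) -
          (N : ℂ) * (Real.pi : ℂ) * lam / (ℏ : ℂ)) * K lam *
        ∏ k, (Complex.Gamma (1 - Complex.I * (lam - τ k) / (ℏ : ℂ)))⁻¹) :
    ∀ lam : ℂ, t lam ≠ 0 → t (lam + Complex.I * (ℏ : ℂ)) ≠ 0 →
      (∀ k : Fin N, ∀ m : ℤ, Complex.I * (lam - τ k) / (ℏ : ℂ) ≠ (m : ℂ)) →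
      t lam * Q lam =
        Λ ^ N * (Complex.I ^ N * Q (lam + Complex.I * (ℏ : ℂ)) +
          Complex.I ^ (-(N : ℤ)) * Q (lam - Complex.I * (ℏ : ℂ))) :=
  fun _ h₀ h₁ _ ↦ baxter_solution_Qplus_general hL ht hQ h₀ h₁ (hK _ (mul_ne_zero h₀ h₁))
end

section
/- Let N ≥ 1 be an integer, let ℏ be a positive real number, let Λ ∈ ℂ with Λ ≠ 0, and fix L ∈ ℂ with exp(L) = ℏ/Λ. Let τ_1,…,τ_N ∈ ℂ and set t(λ) = ∏_{k=1}^N (λ − τ_k). Suppose K : ℂ → ℂ satisfies K(λ + iℏ) = K(λ) − Λ^{2N} · K(λ − iℏ)/(t(λ)·t(λ − iℏ)) for every λ ∈ ℂ with t(λ)·t(λ − iℏ) ≠ 0. Define Q⁻(λ) = exp(−iNλL/ℏ − Nπλ/ℏ) · K(λ) · ∏_{k=1}^N Γ(1 + i(λ − τ_k)/ℏ)⁻¹, where Γ is the complex Gamma function. Then for every λ ∈ ℂ such that t(λ) ≠ 0, t(λ − iℏ) ≠ 0, and i(λ − τ_k)/ℏ is not an integer for any k, one has the Baxter equation t(λ)·Q⁻(λ)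 = Λ^N·( i^N·Q⁻(λ + iℏ) + i^{−N}·Q⁻(λ − iℏ) ). -/
/-!
Write `Q⁻ = W * K`, where `W` is the product of the exponential and the reciprocal Gamma factors.
Since `1 / Γ` is entire, `1 / Γ z = z / Γ (z + 1)` holds for every `z`; together with
`exp L = ℏ / Λ` it gives the first-order equation `(i Λ) ^ N * W (x + i ℏ) = t x * W x`.
This equation, used at `x` and at `x - i ℏ`, expresses both shifted values of `W` through `W x`, and
the Baxter equation for `W * K` becomes a multiple of the difference equation for `K`.
-/

open Complex Finset

theorem mul_gauge_eq_add_of_recurrence {G F : Type*} [AddGroup G] [Field F] {W K t : G → F}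
    {a b : F} {s x : G} (hW : ∀ y, a * W (y + s) = t y * W y) (hx : t x ≠ 0) (hxs : t (x - s) ≠ 0)
    (hK : K (x + s) = K x - a * b * K (x - s) / (t x * t (x - s))) :
    t x * (W x * K x) = a * (W (x + s) * K (x + s)) + b * (W (x - s) * K (x - s)) := by
  have W_sub : W (x - s) = a * W x / t (x - s) := by
    rw [eq_div_iff hxs, mul_comm, ← hW, sub_add_cancel]
  rw [← mul_assoc a, hW x, hK, W_sub]
  field_simp
  ring

theorem prod_inv_Gamma_add_I_mul {ι : Type*} (s : Finset ι) (τ : ι → ℂ) {ℏ : ℂ} (hℏ : ℏ ≠ 0)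
    (x : ℂ) :
    ∏ k ∈ s, (Gamma (1 + I * (x + I * ℏ - τ k) / ℏ))⁻¹ =
      (I / ℏ) ^ #s * (∏ k ∈ s, (x - τ k)) * ∏ k ∈ s, (Gamma (1 + I * (x - τ k) / ℏ))⁻¹ := by
  rw [← prod_const, ← prod_mul_distrib, ← prod_mul_distrib]
  refine prod_congr rfl fun k _ ↦ ?_
  have shift : 1 + I * (x + I * ℏ - τ k) / ℏ = I * (x - τ k) / ℏ := by
    field_simp
    linear_combination ℏ * I_sq
  rw [shift, one_div_Gamma_eq_self_mul_one_div_Gamma_add_one, add_comm _ 1]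
  ring

theorem exp_prefactor_add_I_mul (N : ℕ) (L : ℂ) {ℏ : ℂ} (hℏ : ℏ ≠ 0) (x : ℂ) :
    exp (-(I * N * (x + I * ℏ) * L / ℏ) - N * Real.pi * (x + I * ℏ) / ℏ) =
      (-exp L) ^ N * exp (-(I * N * x * L / ℏ) - N * Real.pi * x / ℏ) := by
  have exp_shift : (-exp L) ^ N = exp (N * (L - Real.pi * I)) := by
    rw [exp_nat_mul, exp_sub, exp_pi_mul_I, div_neg, div_one]
  rw [exp_shift, ← exp_add]
  congr 1
  field_simp
  linear_combination (-(N : ℂ) * L * ℏ) * I_sq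

/-- The gauge factor `W` of `Q⁻ = W * K`, which turns the difference equation for `K` into the
Baxter equation. The parameter `L` is the chosen logarithm of `ℏ / Λ`, so that `exp (-i N x L / ℏ)`
is the power `(Λ / ℏ) ^ (i N x / ℏ)`. -/
noncomputable def baxterGauge {N : ℕ} (ℏ L : ℂ) (τ : Fin N → ℂ) (x : ℂ) : ℂ :=
  exp (-(I * N * x * L / ℏ) - N * Real.pi * x / ℏ) * ∏ k, (Gamma (1 + I * (x - τ k) / ℏ))⁻¹

theorem baxterGauge_add_I_mul {N : ℕ} {ℏ Λ L : ℂ} (hL : exp L = ℏ / Λ) (τ : Fin N → ℂ) (x : ℂ) :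
    (I * Λ) ^ N * baxterGauge ℏ L τ (x + I * ℏ) = (∏ k, (x - τ k)) * baxterGauge ℏ L τ x := by
  obtain ⟨hℏ, hΛ⟩ : ℏ ≠ 0 ∧ Λ ≠ 0 := div_ne_zero_iff.mp (hL ▸ exp_ne_zero L)
  have constants_cancel : (I * Λ) ^ N * (-(ℏ / Λ)) ^ N * (I / ℏ) ^ N = 1 := by
    have base : I * Λ * -(ℏ / Λ) * (I / ℏ) = 1 := by
      field_simp
      simp
    rw [← mul_pow, ← mul_pow, base, one_pow]
  rw [baxterGauge, exp_prefactor_add_I_mul N L hℏ, hL, prod_inv_Gamma_add_I_mul univ τ hℏ, card_fin,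
    baxterGauge]
  linear_combination (∏ k, (x - τ k)) * exp (-(I * N * x * L / ℏ) - N * Real.pi * x / ℏ) *
    (∏ k, (Gamma (1 + I * (x - τ k) / ℏ))⁻¹) * constants_cancel

theorem baxter_solution_Qminus_general {N : ℕ} {ℏ Λ L : ℂ} (hL : exp L = ℏ / Λ)
    {τ : Fin N → ℂ} {t : ℂ → ℂ} (ht : ∀ x, t x = ∏ k, (x - τ k)) {K : ℂ → ℂ}
    (hK : ∀ x, t x * t (x - I * ℏ) ≠ 0 →
      K (x + I * ℏ) = K x - Λ ^ (2 * N) * K (x - I * ℏ) / (t x * t (x - I * ℏ)))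
    {Q : ℂ → ℂ}
    (hQ : ∀ x, Q x = exp (-(I * N * x * L / ℏ) - N * Real.pi * x / ℏ) * K x *
      ∏ k, (Gamma (1 + I * (x - τ k) / ℏ))⁻¹)
    {x : ℂ} (hx : t x ≠ 0) (hxs : t (x - I * ℏ) ≠ 0) :
    t x * Q x = Λ ^ N * (I ^ N * Q (x + I * ℏ) + I ^ (-(N : ℤ)) * Q (x - I * ℏ)) := by
  have Q_eq (y : ℂ) : Q y = baxterGauge ℏ L τ y * K y := by rw [hQ, baxterGauge, mul_right_comm]
  have gauge (y : ℂ) : (I * Λ) ^ N * baxterGauge ℏ L τ (y + I * ℏ) = t y * baxterGauge ℏ L τ y := by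
    rw [ht, baxterGauge_add_I_mul hL]
  have coeff : (I * Λ) ^ N * (Λ ^ N * I ^ (-(N : ℤ))) = Λ ^ (2 * N) := by
    have : I ^ N ≠ 0 := pow_ne_zero N I_ne_zero
    rw [zpow_neg, zpow_natCast, mul_pow]
    field_simp
    ring
  have recurrence := hK x (mul_ne_zero hx hxs)
  rw [← coeff] at recurrence
  have baxter := mul_gauge_eq_add_of_recurrence gauge hx hxs recurrence
  rw [← Q_eq, ← Q_eq, ← Q_eq] at baxter
  rw [baxter]
  ring

/-- The Gutzwiller-type solution `Q⁻` built from a solution `K` of the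
auxiliary difference equation solves the Baxter equation of the closed Toda chain. -/
theorem baxter_solution_Qminus
    (N : ℕ) (hN : 1 ≤ N) (ℏ : ℝ) (hℏ : 0 < ℏ)
    (Λ : ℂ) (hΛ : Λ ≠ 0) (L : ℂ) (hL : Complex.exp L = (ℏ : ℂ) / Λ)
    (τ : Fin N → ℂ) (t : ℂ → ℂ) (ht : ∀ lam : ℂ, t lam = ∏ k, (lam - τ k))
    (K : ℂ → ℂ)
    (hK : ∀ lam : ℂ, t lam * t (lam - Complex.I * (ℏ : ℂ)) ≠ 0 →
      K (lam + Complex.I * (ℏ : ℂ)) =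
        K lam - Λ ^ (2 * N) * K (lam - Complex.I * (ℏ : ℂ)) /
          (t lam * t (lam - Complex.I * (ℏ : ℂ))))
    (Q : ℂ → ℂ)
    (hQ : ∀ lam : ℂ, Q lam =
      Complex.exp (-(Complex.I * (N : ℂ) * lam * L / (ℏ : ℂ)) -
          (N : ℂ) * (Real.pi : ℂ) * lam / (ℏ : ℂ)) * K lam *
        ∏ k, (Complex.Gamma (1 + Complex.I * (lam - τ k) / (ℏ : ℂ)))⁻¹) :
    ∀ lam : ℂ, t lam ≠ 0 → t (lam - Complex.I * (ℏ : ℂ)) ≠ 0 →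
      (∀ k : Fin N, ∀ m : ℤ, Complex.I * (lam - τ k) / (ℏ : ℂ) ≠ (m : ℂ)) →
      t lam * Q lam =
        Λ ^ N * (Complex.I ^ N * Q (lam + Complex.I * (ℏ : ℂ)) +
          Complex.I ^ (-(N : ℤ)) * Q (lam - Complex.I * (ℏ : ℂ))) :=
  fun _ hx hxs _ ↦ baxter_solution_Qminus_general hL ht hK hQ hx hxs
end

section
/- Let N ≥ 1 be an integer, let ℏ ∈ ℂ, let Λ ∈ ℂ with Λ ≠ 0, and let t : ℂ → ℂ be any function. Suppose Q⁺, Q⁻ : ℂ → ℂ both solve the Baxter equation t(λ)·Q(λ) = Λ^N·( i^N·Q(λ + iℏ) + i^{−N}·Q(λ − iℏ) ) for all λ ∈ ℂ. Define the quantum Wronskian W(λ) = Q⁺(λ)·Q⁻(λ + iℏ) − Q⁻(λ)·Q⁺(λ + iℏ). Then W(λ + iℏ) = (−1)^N·W(λ) for all λ ∈ ℂ. In particular, if W(λ₀) = 0 for some λ₀, then W(λ₀ + iℏ·n) = 0 for every integer n. -/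
/-!
Eliminating `t` between the Baxter equations of two solutions at `x + h` (multiply the equation for
`f` by `g (x + h)` and vice versa, then subtract) leaves `a (x + h) W(x + h) = b (x + h) W(x)`, as
for the Casoratian of any second-order difference equation. For the Toda chain `b = (-1)^N a`, since
`i^(-N) = (-1)^N i^N`. When `a` and `b` take regular values, `W` vanishes at `x + h` exactly when it
vanishes at `x`, so the predicate `W x = 0` has period `h`, hence every period `n • h`.
-/

section BaxterEquation

variable {G R : Type*} [AddGroup G] [CommRing R] {h : G} {a b ε t f g : G → R}

/-- The Baxter equation with step `h`, transfer-matrix eigenvalue `t` and coefficients `a`, `b`.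
The closed Toda chain has `h = iℏ` and constant `a = Λ^N i^N`, `b = Λ^N i^(-N)`. -/
def IsBaxterSolution (h : G) (a b t f : G → R) : Prop :=
  ∀ x, t x * f x = a x * f (x + h) + b x * f (x - h)

/-- The quantum Wronskian, or Casoratian, of `f` and `g`, with the shift taken forward from `x`. -/
def quantumWronskian (h : G) (f g : G → R) (x : G) : R :=
  f x * g (x + h) - g x * f (x + h)

theorem IsBaxterSolution.mul_quantumWronskian_add (hf : IsBaxterSolution h a b t f)
    (hg : IsBaxterSolution h a b t g) (x : G) :
    a (x + h) * quantumWronskian h f g (x + h) = b (x + h) * quantumWronskian h f g x := by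
  have baxter_f := hf (x + h)
  have baxter_g := hg (x + h)
  rw [add_sub_cancel_right] at baxter_f baxter_g
  unfold quantumWronskian
  linear_combination g (x + h) * baxter_f - f (x + h) * baxter_g

theorem IsBaxterSolution.periodic_quantumWronskian_eq_zero (hf : IsBaxterSolution h a b t f)
    (hg : IsBaxterSolution h a b t g) (ha : ∀ x, IsLeftRegular (a x))
    (hb : ∀ x, IsLeftRegular (b x)) :
    Function.Periodic (fun x => quantumWronskian h f g x = 0) h := by
  refine fun x => propext ?_
  calc
    quantumWronskian h f g (x + h) = 0
      ↔ a (x + h) * quantumWronskian h f g (x + h) = 0 := (ha _).mul_left_eq_zero_iff.symm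
    _ ↔ b (x + h) * quantumWronskian h f g x = 0 := by rw [hf.mul_quantumWronskian_add hg]
    _ ↔ quantumWronskian h f g x = 0 := (hb _).mul_left_eq_zero_iff

theorem quantum_wronskian_quasi_periodic_general (ha : ∀ x, IsLeftRegular (a x))
    (hε : ∀ x, IsLeftRegular (ε x)) (hf : IsBaxterSolution h a (ε * a) t f)
    (hg : IsBaxterSolution h a (ε * a) t g) :
    (∀ x, quantumWronskian h f g (x + h) = ε (x + h) * quantumWronskian h f g x) ∧
      ∀ x, quantumWronskian h f g x = 0 → ∀ n : ℤ, quantumWronskian h f g (x + n • h) = 0 := by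
  refine ⟨fun x => ha (x + h) ?_, fun x hx n => ?_⟩
  · calc
      a (x + h) * quantumWronskian h f g (x + h)
          = (ε * a) (x + h) * quantumWronskian h f g x := hf.mul_quantumWronskian_add hg x
      _ = a (x + h) * (ε (x + h) * quantumWronskian h f g x) := by
          rw [Pi.mul_apply, mul_comm (ε _), mul_assoc]
  · have zeros_periodic := hf.periodic_quantumWronskian_eq_zero hg ha fun x => (hε x).mul (ha x)
    exact (zeros_periodic.zsmul n x).mpr hx

end BaxterEquation

theorem I_zpow_neg_natCast (N : ℕ) :
    Complex.I ^ (-(N : ℤ)) = (-1 : ℂ) ^ N * Complex.I ^ N := by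
  rw [zpow_neg, zpow_natCast, ← inv_pow, Complex.inv_I, ← mul_pow, neg_one_mul]

theorem isBaxterSolution_of_toda {N : ℕ} {ℏ Λ : ℂ} {t Q : ℂ → ℂ}
    (hQ : ∀ lam : ℂ, t lam * Q lam =
      Λ ^ N * (Complex.I ^ N * Q (lam + Complex.I * ℏ) +
        Complex.I ^ (-(N : ℤ)) * Q (lam - Complex.I * ℏ))) :
    IsBaxterSolution (Complex.I * ℏ) (fun _ => Λ ^ N * Complex.I ^ N)
      ((fun _ => (-1) ^ N) * fun _ => Λ ^ N * Complex.I ^ N) t Q := by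
  intro lam
  rw [hQ, I_zpow_neg_natCast, Pi.mul_apply]
  ring

/-- The quantum Wronskian of two solutions of the Baxter equation is
quasi-periodic, `W(λ + iℏ) = (−1)^N W(λ)`, and hence its zeros propagate along `λ₀ + iℏℤ`. -/
theorem quantum_wronskian_quasi_periodic
    (N : ℕ) (hN : 1 ≤ N) (ℏ : ℂ) (Λ : ℂ) (hΛ : Λ ≠ 0) (t : ℂ → ℂ)
    (Qp Qm : ℂ → ℂ)
    (hQp : ∀ lam : ℂ, t lam * Qp lam =
      Λ ^ N * (Complex.I ^ N * Qp (lam + Complex.I * ℏ) +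
        Complex.I ^ (-(N : ℤ)) * Qp (lam - Complex.I * ℏ)))
    (hQm : ∀ lam : ℂ, t lam * Qm lam =
      Λ ^ N * (Complex.I ^ N * Qm (lam + Complex.I * ℏ) +
        Complex.I ^ (-(N : ℤ)) * Qm (lam - Complex.I * ℏ)))
    (W : ℂ → ℂ)
    (hW : ∀ lam : ℂ, W lam =
      Qp lam * Qm (lam + Complex.I * ℏ) - Qm lam * Qp (lam + Complex.I * ℏ)) :
    (∀ lam : ℂ, W (lam + Complex.I * ℏ) = (-1 : ℂ) ^ N * W lam) ∧
    (∀ lam₀ : ℂ, W lam₀ = 0 → ∀ n : ℤ, W (lam₀ + Complex.I * ℏ * (n : ℂ)) = 0) := by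
  obtain rfl : W = quantumWronskian (Complex.I * ℏ) Qp Qm := funext hW
  have coeff_regular : IsRegular (Λ ^ N * Complex.I ^ N) := .of_ne_zero (by simp [hΛ])
  have sign_regular : IsRegular ((-1 : ℂ) ^ N) := .of_ne_zero (by simp)
  simpa only [zsmul_eq_mul, mul_comm (Complex.I * ℏ)] using
    quantum_wronskian_quasi_periodic_general (fun _ => coeff_regular.left)
      (fun _ => sign_regular.left) (isBaxterSolution_of_toda hQp) (isBaxterSolution_of_toda hQm)
end

section
/- Let N ≥ 1 be an integer, let c_0,…,c_N be real numbers, and let Λ, ℏ be real numbers. Define the operator B on functions f : ℂ → ℂ by (B f)(z) = −iℏ·z·f′(z). Suppose χ : ℂ → ℂ is holomorphic on ℂ∖{0} and satisfies, for all z ≠ 0, the equation ∑_{k=0}^N c_k·(B^{∘k}χ)(z) = Λ^N·( i^N·z + i^{−N}·z^{−1} )·χ(z). Define ψ(z) = conj( χ( 1/conj(z) ) ). Then ψ is holomorphic on ℂ∖{0} and satisfies the same equation: ∑_{k=0}^N c_k·(B^{∘k}ψ)(z) = Λ^N·( i^N·z + i^{−N}·z^{−1} )·ψ(z) for all z ≠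 0. -/
/-!
Let `R` send `f` to `z ↦ conj (f (1 / conj z))`. The logarithmic derivative `z ∂_z` anticommutes
with `R`, because inversion reverses the flow of `z ∂_z`; and `conj (-iℏ) = i · conj ℏ` supplies a
second sign. Hence `R` intertwines the operators `B` with parameters `ℏ` and `conj ℏ`, together with
all their iterates. So `R` carries solutions of `∑ c_k B^k χ = V χ` to solutions of the equation
with every coefficient conjugated and `V` replaced by `R V`. Real coefficients are fixed, and
`V = Λ^N (i^N z + i^{-N} z⁻¹)` is fixed as well, because `R` exchanges its two terms.
-/

/-- The operator `B f = −iℏ·z·f′`, i.e. `−iℏ z∂_z`. -/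
noncomputable def operB (ℏ : ℂ) (f : ℂ → ℂ) : ℂ → ℂ :=
  fun z => -Complex.I * ℏ * (z * deriv f z)

open scoped ComplexConjugate

theorem deriv_comp_inv_of_ne_zero {𝕜 E : Type*} [NontriviallyNormedField 𝕜] [NormedAddCommGroup E]
    [NormedSpace 𝕜 E] (f : 𝕜 → E) {z : 𝕜} (hz : z ≠ 0) :
    deriv (fun w => f w⁻¹) z = -(z ^ 2)⁻¹ • deriv f z⁻¹ := by
  by_cases hf : DifferentiableAt 𝕜 f z⁻¹
  · exact (hf.hasDerivAt.scomp z (hasDerivAt_inv hz)).deriv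
  · have hf_inv : ¬DifferentiableAt 𝕜 (fun w => f w⁻¹) z := fun h => hf <| by
      rw [← inv_inv z] at h
      simpa only [Function.comp_def, inv_inv] using
        h.comp z⁻¹ (differentiableAt_inv (inv_ne_zero hz))
    rw [deriv_zero_of_not_differentiableAt hf, deriv_zero_of_not_differentiableAt hf_inv, smul_zero]

/-- The action on functions of the antiholomorphic inversion `z ↦ 1 / conj z` combined with complex
conjugation of values. As `0⁻¹ = 0`, the value at `0` is `conj (f 0)`. -/
noncomputable def reflect (f : ℂ → ℂ) : ℂ → ℂ := fun z => conj (f (conj z)⁻¹)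

theorem reflect_eq_conj_conj_comp_inv (f : ℂ → ℂ) :
    reflect f = fun z => (conj ∘ f ∘ conj) z⁻¹ := by
  funext z
  simp only [reflect, Function.comp_apply, map_inv₀]

theorem differentiableAt_reflect {f : ℂ → ℂ} {z : ℂ} (hz : z ≠ 0)
    (hf : DifferentiableAt ℂ f (conj z)⁻¹) : DifferentiableAt ℂ (reflect f) z := by
  rw [← map_inv₀, ← differentiableAt_conj_conj_iff] at hf
  rw [reflect_eq_conj_conj_comp_inv]
  exact hf.comp z (differentiableAt_inv hz)

theorem deriv_reflect (f : ℂ → ℂ) {z : ℂ} (hz : z ≠ 0) :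
    deriv (reflect f) z = -(z ^ 2)⁻¹ * conj (deriv f (conj z)⁻¹) := by
  rw [reflect_eq_conj_conj_comp_inv, deriv_comp_inv_of_ne_zero _ hz, deriv_conj_conj, smul_eq_mul,
    Function.comp_apply, Function.comp_apply, map_inv₀]

theorem semiconj_reflect_operB (ℏ : ℂ) :
    Function.Semiconj reflect (operB ℏ) (operB (conj ℏ)) := by
  intro f
  funext z
  obtain rfl | hz := eq_or_ne z 0
  · simp [reflect, operB]
  · calc reflect (operB ℏ f) z
        = -Complex.I * conj ℏ * -(z⁻¹ * conj (deriv f (conj z)⁻¹)) := by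
          simp only [reflect, operB, map_mul, map_neg, Complex.conj_I, map_inv₀, Complex.conj_conj]
          ring
      _ = -Complex.I * conj ℏ * (z * (-(z ^ 2)⁻¹ * conj (deriv f (conj z)⁻¹))) := by
          field_simp
      _ = operB (conj ℏ) (reflect f) z := by rw [operB, deriv_reflect f hz]

theorem sum_mul_operB_iterate_reflect (s : Finset ℕ) (c : ℕ → ℂ) (ℏ : ℂ) (f : ℂ → ℂ) (z : ℂ) :
    ∑ k ∈ s, conj (c k) * (operB (conj ℏ))^[k] (reflect f) z =
      conj (∑ k ∈ s, c k * (operB ℏ)^[k] f (conj z)⁻¹) := by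
  simp only [← ((semiconj_reflect_operB ℏ).iterate_right _).eq f, reflect, map_sum, map_mul]

/-- The potential `Λ^N (i^N z + i^{-N} z⁻¹)` on the right-hand side of the oper equation. -/
noncomputable def operPotential (N : ℕ) (Λ : ℂ) : ℂ → ℂ :=
  fun z => Λ ^ N * (Complex.I ^ N * z + Complex.I ^ (-(N : ℤ)) * z⁻¹)

theorem reflect_operPotential (N : ℕ) (Λ : ℂ) :
    reflect (operPotential N Λ) = operPotential N (conj Λ) := by
  have conj_I_eq_inv : conj Complex.I = Complex.I⁻¹ := by rw [Complex.conj_I, Complex.inv_I]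
  funext z
  simp only [reflect, operPotential, map_mul, map_add, map_pow, map_inv₀,
    Complex.conj_conj, conj_I_eq_inv, inv_inv, zpow_neg, zpow_natCast, inv_pow]
  ring

theorem oper_equation_antiholomorphic_symmetry_general
    {U : Set ℂ} (hU : IsOpen U) (hU₀ : 0 ∉ U) (s : Finset ℕ) (c : ℕ → ℂ) (ℏ : ℂ) (V : ℂ → ℂ)
    (χ : ℂ → ℂ) (hχdiff : DifferentiableOn ℂ χ U)
    (hχ : ∀ z ∈ U, ∑ k ∈ s, c k * (operB ℏ)^[k] χ z = V z * χ z) :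
    DifferentiableOn ℂ (reflect χ) {z | (conj z)⁻¹ ∈ U} ∧
    ∀ z, (conj z)⁻¹ ∈ U →
      ∑ k ∈ s, conj (c k) * (operB (conj ℏ))^[k] (reflect χ) z = reflect V z * reflect χ z := by
  refine ⟨fun z hz => ?_, fun z hz => ?_⟩
  · have hz₀ : z ≠ 0 := by
      rintro rfl
      simp [hU₀] at hz
    exact (differentiableAt_reflect hz₀
      (hχdiff.differentiableAt (hU.mem_nhds hz))).differentiableWithinAt
  · rw [sum_mul_operB_iterate_reflect, hχ _ hz, map_mul, reflect, reflect]

/-- For real coefficients `c_k`, real `Λ` and real `ℏ`, the oper equation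
is invariant under the antiholomorphic inversion `z ↦ 1/conj z` combined with overall
complex conjugation. -/
theorem oper_equation_antiholomorphic_symmetry
    (N : ℕ) (hN : 1 ≤ N) (c : ℕ → ℝ) (Λ ℏ : ℝ)
    (χ : ℂ → ℂ)
    (hχdiff : DifferentiableOn ℂ χ {z : ℂ | z ≠ 0})
    (hχ : ∀ z : ℂ, z ≠ 0 →
      ∑ k ∈ Finset.range (N + 1), (c k : ℂ) * (operB (ℏ : ℂ))^[k] χ z =
        (Λ : ℂ) ^ N * (Complex.I ^ N * z + Complex.I ^ (-(N : ℤ)) * z⁻¹) * χ z)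
    (ψ : ℂ → ℂ)
    (hψ : ∀ z : ℂ, ψ z = (starRingEnd ℂ) (χ ((starRingEnd ℂ) z)⁻¹)) :
    DifferentiableOn ℂ ψ {z : ℂ | z ≠ 0} ∧
    ∀ z : ℂ, z ≠ 0 →
      ∑ k ∈ Finset.range (N + 1), (c k : ℂ) * (operB (ℏ : ℂ))^[k] ψ z =
        (Λ : ℂ) ^ N * (Complex.I ^ N * z + Complex.I ^ (-(N : ℤ)) * z⁻¹) * ψ z := by
  obtain rfl : ψ = reflect χ := funext hψ
  simpa [reflect_operPotential, operPotential] using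
    oper_equation_antiholomorphic_symmetry_general isOpen_ne (by simp) (Finset.range (N + 1))
      (fun k => c k) ℏ (operPotential N Λ) χ hχdiff hχ
end

section
/- Let N ≥ 2 be an integer, let k be an integer with 0 ≤ k ≤ 2N−1, and let s_1,…,s_{N−1} ∈ ℂ be arbitrary Stokes constants, extended to negative indices by s_{i−N} := (−1)^{N−1}·s_i. Then the Stokes matrix 𝒮_k has determinant 1. -/
/-!
Call an index `n` active if the residue of `k - 2n` modulo `2N` lies in `{1,…,N-1}`. A nonzero
off-diagonal entry at `(m, n)` forces `n` to be active and `m ≡ k - n (mod N)`. Then `k - 2m` and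
`k - 2n` are negatives of each other modulo `2N`, so the residue of `k - 2m` lies in
`{N+1,…,2N-1}` and `m` is not active. Ordering the inactive indices before the active ones thus
makes the matrix block upper triangular with identity diagonal blocks, whatever the values of `s`.
-/

/-- The Stokes matrix `𝒮_k`: `N×N` matrix with `1` on the diagonal, entry `s_{n−m}` at
position `(m,n)` when `m ≡ k−n (mod N)` and the residue of `k−2n` modulo `2N` lies in
`{1,…,N−1}`, and `0` otherwise. -/
def StokesMatrix (N k : ℕ) (s : ℤ → ℂ) : Matrix (Fin N) (Fin N) ℂ :=
  Matrix.of fun m n =>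
    if m = n then 1
    else if ((m : ℤ) + (n : ℤ) - (k : ℤ)) % (N : ℤ) = 0 ∧
        1 ≤ ((k : ℤ) - 2 * (n : ℤ)) % (2 * (N : ℤ)) ∧
        ((k : ℤ) - 2 * (n : ℤ)) % (2 * (N : ℤ)) ≤ (N : ℤ) - 1 then
      s ((n : ℤ) - (m : ℤ))
    else 0

lemma det_eq_one_of_eq_one_apply_of_le {ι α R : Type*} [Fintype ι] [DecidableEq ι]
    [LinearOrder α] [CommRing R] {M : Matrix ι ι R} (b : ι → α)
    (h : ∀ i j, b j ≤ b i → M i j = (1 : Matrix ι ι R) i j) : M.det = 1 := by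
  have htri : M.BlockTriangular b := fun i j hlt => by
    rw [h i j hlt.le, Matrix.one_apply_ne (ne_of_apply_ne b hlt.ne')]
  have hblock (a : α) : M.toSquareBlock b a = 1 := by
    ext i j
    rw [Matrix.toSquareBlock_def, Matrix.of_apply, h _ _ (j.2.trans i.2.symm).le]
    simp only [Matrix.one_apply, Subtype.ext_iff]
  simp only [htri.det, hblock, Matrix.det_one, Finset.prod_const_one]

lemma emod_add_emod_eq_abs_of_dvd_add {a b d : ℤ} (h : d ∣ a + b) (ha : ¬ d ∣ a) :
    a % d + b % d = |d| := by
  have hb : b ≡ -a [ZMOD d] := Int.modEq_iff_dvd.mpr (by rwa [← neg_add', dvd_neg])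
  rw [hb.eq, Int.neg_emod, if_neg ha, Int.natCast_natAbs, add_sub_cancel]

/-- The condition on `n` under which column `n` of `𝒮_k` may have an off-diagonal entry: the
residue of `k - 2n` modulo `2N` lies in `{1,…,N-1}`. -/
def IsActiveIndex (N k n : ℤ) : Prop :=
  (k - 2 * n) % (2 * N) ∈ Set.Icc 1 (N - 1)

lemma not_isActiveIndex_of_dvd {N k m n : ℤ} (hmn : N ∣ m + n - k) (hn : IsActiveIndex N k n) :
    ¬ IsActiveIndex N k m := by
  rintro ⟨-, hm_le⟩
  obtain ⟨hn_pos, hn_le⟩ := hn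
  have hdvd : 2 * N ∣ (k - 2 * n) + (k - 2 * m) := by
    rw [show (k - 2 * n) + (k - 2 * m) = -(2 * (m + n - k)) by ring, dvd_neg]
    exact mul_dvd_mul_left 2 hmn
  have hsum : (k - 2 * n) % (2 * N) + (k - 2 * m) % (2 * N) = |2 * N| :=
    emod_add_emod_eq_abs_of_dvd_add hdvd fun h => by
      have := Int.emod_eq_zero_of_dvd h
      omega
  have hle : 2 * N ≤ |2 * N| := le_abs_self _
  omega

lemma stokesMatrix_apply_eq_one_apply {N k : ℕ} {s : ℤ → ℂ} {m n : Fin N}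
    (h : IsActiveIndex N k n → IsActiveIndex N k m) :
    StokesMatrix N k s m n = (1 : Matrix (Fin N) (Fin N) ℂ) m n := by
  simp only [StokesMatrix, Matrix.of_apply, Matrix.one_apply]
  refine if_congr Iff.rfl rfl (if_neg ?_)
  rintro ⟨hmn, hn⟩
  exact not_isActiveIndex_of_dvd (Int.dvd_of_emod_eq_zero hmn) hn (h hn)

theorem stokes_matrix_det_one_general (N k : ℕ) (s : ℤ → ℂ) : (StokesMatrix N k s).det = 1 :=
  -- `Prop` is ordered by implication, so inactive indices come before active ones.
  det_eq_one_of_eq_one_apply_of_le (fun n : Fin N => IsActiveIndex N k n)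
    fun _ _ => stokesMatrix_apply_eq_one_apply

/-- every Stokes matrix `𝒮_k`, `0 ≤ k ≤ 2N−1`, has determinant `1`, where the
Stokes constants `s_1,…,s_{N−1}` are arbitrary and are extended to negative indices by
`s_{i−N} = (−1)^{N−1} s_i`. -/
theorem stokes_matrix_det_one
    (N : ℕ) (hN : 2 ≤ N) (k : ℕ) (hk : k ≤ 2 * N - 1)
    (s : ℤ → ℂ)
    (hs : ∀ i : ℤ, 1 ≤ i → i ≤ (N : ℤ) - 1 →
      s (i - (N : ℤ)) = (-1 : ℂ) ^ (N - 1) * s i) :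
    (StokesMatrix N k s).det = 1 :=
  stokes_matrix_det_one_general N k s
end

section
/- Let N ≥ 2 be an integer and let s_1,…,s_{N−1} ∈ ℂ be arbitrary Stokes constants, extended to negative indices by s_{i−N} := (−1)^{N−1}·s_i. Then 𝒮_0·𝒮_1·P_N = M_0, where 𝒮_0, 𝒮_1 are the Stokes matrices with k = 0 and k = 1, P_N is the twisted cyclic permutation matrix, and M_0 is the explicit monodromy matrix. -/
/-- The twisted cyclic permutation matrix `P_N`: `[P_N]_{n+1,n} = 1` for `n = 0,…,N−2`,
`[P_N]_{0,N−1} = (−1)^{N−1}`, all other entries `0`. -/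
def PermMat (N : ℕ) : Matrix (Fin N) (Fin N) ℂ :=
  Matrix.of fun i j =>
    if (i : ℕ) = (j : ℕ) + 1 then 1
    else if (i : ℕ) = 0 ∧ (j : ℕ) = N - 1 then (-1 : ℂ) ^ (N - 1)
    else 0

/-- The explicit monodromy matrix `M_0`: `[M_0]_{0,N−1} = (−1)^{N−1}`, `[M_0]_{n,n−1} = 1`
for `n = 1,…,N−1`, `[M_0]_{i,N−1−i} = s_{N−2i}` for `1 ≤ i ≤ ⌊(N−1)/2⌋`,
`[M_0]_{i,N−i} = s_{N−2i+1}` for `1 ≤ i ≤ ⌊N/2⌋`, all other entries `0`. -/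
def MonodromyMat (N : ℕ) (s : ℤ → ℂ) : Matrix (Fin N) (Fin N) ℂ :=
  Matrix.of fun i j =>
    if (i : ℕ) = 0 ∧ (j : ℕ) = N - 1 then (-1 : ℂ) ^ (N - 1)
    else if (i : ℕ) = (j : ℕ) + 1 then 1
    else if 1 ≤ (i : ℕ) ∧ (i : ℕ) ≤ (N - 1) / 2 ∧ (j : ℕ) = N - 1 - (i : ℕ) then
      s ((N : ℤ) - 2 * (i : ℤ))
    else if 1 ≤ (i : ℕ) ∧ (i : ℕ) ≤ N / 2 ∧ (j : ℕ) = N - (i : ℕ) then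
      s ((N : ℤ) - 2 * (i : ℤ) + 1)
    else 0

theorem emod_eq_zero_iff_of_neg_lt_of_lt {N x : ℤ} (hx : -N < x) (hx' : x < 2 * N) :
    x % N = 0 ↔ x = 0 ∨ x = N := by
  rcases lt_or_ge x 0 with hneg | hnonneg
  · rw [← Int.add_emod_right, Int.emod_eq_of_lt (by omega) (by omega)]
    omega
  rcases lt_or_ge x N with hlt | hge
  · rw [Int.emod_eq_of_lt hnonneg hlt]
    omega
  · rw [← Int.sub_emod_right, Int.emod_eq_of_lt (by omega) (by omega)]
    omega

theorem emod_two_mul_mem_Icc_iff {N x : ℤ} (hx : -(2 * N) < x) (hx' : x < N) :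
    x % (2 * N) ∈ Set.Icc 1 (N - 1) ↔ 0 < x ∨ x < -N := by
  rw [Set.mem_Icc]
  rcases lt_or_ge x 0 with hneg | hnonneg
  · rw [← Int.add_emod_right, Int.emod_eq_of_lt (by omega) (by omega)]
    omega
  · rw [Int.emod_eq_of_lt hnonneg (by omega)]
    omega

/-- The positions `(m, n)` at which the `N × N` Stokes matrix `𝒮_k` has the off-diagonal entry
`s_{n-m}`. All arguments are integers, so that `k - 2 * n` is a genuine difference. -/
abbrev IsStokesPosition (N k m n : ℤ) : Prop :=
  (m + n - k) % N = 0 ∧ 1 ≤ (k - 2 * n) % (2 * N) ∧ (k - 2 * n) % (2 * N) ≤ N - 1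

namespace IsStokesPosition

theorem ne {N k m n : ℤ} (h : IsStokesPosition N k m n) : m ≠ n := by
  rintro rfl
  obtain ⟨hmod, hpos, hlt⟩ := h
  have hdvd : N ∣ (k - 2 * m) % (2 * N) := by
    obtain ⟨c, hc⟩ := Int.dvd_of_emod_eq_zero hmod
    exact (EuclideanDomain.dvd_mod_iff (dvd_mul_left N 2)).2 ⟨-c, by linear_combination -hc⟩
  have := Int.le_of_dvd (by omega) hdvd
  omega

theorem not_succ {N k m l n : ℤ} (h : IsStokesPosition N k m l) :
    ¬ IsStokesPosition N (k + 1) l n := by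
  rintro ⟨hmod, hpos', hlt'⟩
  obtain ⟨-, hpos, hlt⟩ := h
  have hdvd : 2 * N ∣ (k - 2 * l) % (2 * N) + (k + 1 - 2 * n) % (2 * N) + 1 := by
    obtain ⟨c, hc⟩ := Int.dvd_of_emod_eq_zero hmod
    have hl := Int.emod_add_mul_ediv (k - 2 * l) (2 * N)
    have hn := Int.emod_add_mul_ediv (k + 1 - 2 * n) (2 * N)
    refine ⟨-c - (k - 2 * l) / (2 * N) - (k + 1 - 2 * n) / (2 * N), ?_⟩
    linear_combination hl + hn - 2 * hc
  have := Int.le_of_dvd (by omega) hdvd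
  omega

end IsStokesPosition

theorem isStokesPosition_iff {N k m n : ℤ} (hk : 0 ≤ k) (hkN : k < N) (hm : 0 ≤ m) (hmN : m < N)
    (hn : 0 ≤ n) (hnN : n < N) :
    IsStokesPosition N k m n ↔ m + n = k ∧ n < m ∨ m + n = k + N ∧ m < n := by
  have hresidue := emod_two_mul_mem_Icc_iff (N := N) (x := k - 2 * n) (by omega) (by omega)
  rw [Set.mem_Icc] at hresidue
  rw [IsStokesPosition, hresidue, emod_eq_zero_iff_of_neg_lt_of_lt (by omega) (by omega)]
  omega

theorem stokesMatrix_sub_one_apply (N k : ℕ) (s : ℤ → ℂ) (m n : Fin N) :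
    (StokesMatrix N k s - 1) m n = if IsStokesPosition N k m n then s (n - m) else 0 := by
  rcases eq_or_ne m n with rfl | hne
  · simp [StokesMatrix, mt IsStokesPosition.ne]
  · simp [StokesMatrix, IsStokesPosition, hne]

theorem stokesMatrix_sub_one_mul_succ_sub_one (N k : ℕ) (s : ℤ → ℂ) :
    (StokesMatrix N k s - 1) * (StokesMatrix N (k + 1) s - 1) = 0 := by
  ext m n
  rw [Matrix.mul_apply, Matrix.zero_apply]
  refine Finset.sum_eq_zero fun l _ => ?_
  rw [stokesMatrix_sub_one_apply, stokesMatrix_sub_one_apply, Nat.cast_succ]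
  split_ifs with hml hln
  · exact absurd hln hml.not_succ
  all_goals simp only [mul_zero, zero_mul]

theorem stokesMatrix_mul_succ (N k : ℕ) (s : ℤ → ℂ) :
    StokesMatrix N k s * StokesMatrix N (k + 1) s =
      StokesMatrix N k s + StokesMatrix N (k + 1) s - 1 := by
  rw [← sub_eq_zero, ← stokesMatrix_sub_one_mul_succ_sub_one N k s]
  noncomm_ring

theorem stokesMatrix_apply_of_lt {N k : ℕ} (hk : k < N) (s : ℤ → ℂ) (m n : Fin N) :
    StokesMatrix N k s m n =
      if m = n then 1
      else if (m + n : ℕ) = k ∧ n < m ∨ (m + n : ℕ) = k + N ∧ m < n then s (n - m)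
      else 0 := by
  have hpos : IsStokesPosition N k m n ↔
      (m + n : ℕ) = k ∧ n < m ∨ (m + n : ℕ) = k + N ∧ m < n := by
    rw [isStokesPosition_iff] <;> omega
  simp only [StokesMatrix, Matrix.of_apply, ← hpos]

theorem stokesMatrix_zero_mul_one_apply_zero {N : ℕ} (hN : 2 ≤ N) (s : ℤ → ℂ) {i l : Fin N}
    (hl : (l : ℕ) = 0) :
    (StokesMatrix N 0 s * StokesMatrix N 1 s) i l =
      if (i : ℕ) = 0 then 1 else if (i : ℕ) = 1 then s (-1) else 0 := by
  rw [stokesMatrix_mul_succ, Matrix.sub_apply, Matrix.add_apply, Matrix.one_apply,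
    stokesMatrix_apply_of_lt (by omega), stokesMatrix_apply_of_lt (by omega)]
  split_ifs <;> first | omega | simp [*]

theorem stokesMatrix_zero_mul_one_apply_of_pos {N : ℕ} (s : ℤ → ℂ) {i l : Fin N}
    (hl : 0 < (l : ℕ)) :
    (StokesMatrix N 0 s * StokesMatrix N 1 s) i l =
      if i = l then 1
      else if i < l ∧ ((i + l : ℕ) = N ∨ (i + l : ℕ) = N + 1) then s (l - i)
      else 0 := by
  rw [stokesMatrix_mul_succ, Matrix.sub_apply, Matrix.add_apply, Matrix.one_apply,
    stokesMatrix_apply_of_lt (by omega), stokesMatrix_apply_of_lt (by omega)]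
  split_ifs <;> first | omega | simp

theorem mul_permMat_apply_of_eq_add_one {ι : Type*} {N : ℕ} (X : Matrix ι (Fin N) ℂ) (i : ι)
    {j l : Fin N} (hl : (l : ℕ) = j + 1) : (X * PermMat N) i j = X i l := by
  have hcol : (fun m => PermMat N m j) = Pi.single l 1 := by
    ext m
    simp only [PermMat, Matrix.of_apply, Pi.single_apply, Fin.ext_iff]
    split_ifs <;> first | omega | rfl
  rw [Matrix.mul_apply', hcol, dotProduct_single, mul_one]

theorem mul_permMat_apply_last {ι : Type*} {N : ℕ} (X : Matrix ι (Fin N) ℂ) (i : ι)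
    {j l : Fin N} (hj : (j : ℕ) + 1 = N) (hl : (l : ℕ) = 0) :
    (X * PermMat N) i j = X i l * (-1) ^ (N - 1) := by
  have hcol : (fun m => PermMat N m j) = Pi.single l ((-1) ^ (N - 1)) := by
    ext m
    simp only [PermMat, Matrix.of_apply, Pi.single_apply, Fin.ext_iff]
    split_ifs <;> first | omega | rfl
  rw [Matrix.mul_apply', hcol, dotProduct_single]

theorem monodromyMat_apply_of_eq_add_one {N : ℕ} (s : ℤ → ℂ) (i : Fin N) {j l : Fin N}
    (hl : (l : ℕ) = j + 1) :
    MonodromyMat N s i j =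
      if i = l then 1
      else if i < l ∧ ((i + l : ℕ) = N ∨ (i + l : ℕ) = N + 1) then s (l - i)
      else 0 := by
  simp only [MonodromyMat, Matrix.of_apply]
  split_ifs <;> first | omega | rfl | (congr 1; omega)

theorem monodromyMat_apply_last {N : ℕ} (s : ℤ → ℂ) (i : Fin N) {j : Fin N}
    (hj : (j : ℕ) + 1 = N) :
    MonodromyMat N s i j =
      if (i : ℕ) = 0 then (-1) ^ (N - 1) else if (i : ℕ) = 1 then s (N - 1) else 0 := by
  simp only [MonodromyMat, Matrix.of_apply]
  split_ifs <;> first | omega | rfl | (congr 1; omega)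

/-- `𝒮_0 · 𝒮_1 · P_N = M_0`, for arbitrary Stokes constants `s_1,…,s_{N−1}`
extended to negative indices by `s_{i−N} = (−1)^{N−1} s_i`. -/
theorem stokes_product_equals_monodromy
    (N : ℕ) (hN : 2 ≤ N) (s : ℤ → ℂ)
    (hs : ∀ i : ℤ, 1 ≤ i → i ≤ (N : ℤ) - 1 →
      s (i - (N : ℤ)) = (-1 : ℂ) ^ (N - 1) * s i) :
    StokesMatrix N 0 s * StokesMatrix N 1 s * PermMat N = MonodromyMat N s := by
  ext i j
  rcases (Nat.succ_le_of_lt j.isLt).lt_or_eq with hj | hj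
  · have hl : ((⟨j + 1, hj⟩ : Fin N) : ℕ) = j + 1 := rfl
    rw [mul_permMat_apply_of_eq_add_one _ _ hl, monodromyMat_apply_of_eq_add_one s i hl,
      stokesMatrix_zero_mul_one_apply_of_pos s (Nat.succ_pos _)]
  · have hs_neg_one : s (-1) = (-1) ^ (N - 1) * s (N - 1) := by
      simpa using hs (N - 1) (by omega) le_rfl
    have hsign : ((-1) ^ (N - 1) : ℂ) * (-1) ^ (N - 1) = 1 := by
      rw [← mul_pow, neg_one_mul, neg_neg, one_pow]
    have hl : ((⟨0, by omega⟩ : Fin N) : ℕ) = 0 := rfl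
    rw [mul_permMat_apply_last _ _ hj hl, monodromyMat_apply_last s i hj,
      stokesMatrix_zero_mul_one_apply_zero hN s hl, hs_neg_one]
    split_ifs
    · rw [one_mul]
    · rw [mul_right_comm, hsign, one_mul]
    · rw [zero_mul]
end

section
/- Let N ≥ 2 be an integer and let s_1,…,s_{N−1} ∈ ℂ. Then the characteristic polynomial of the explicit monodromy matrix M_0 is det(λ·I − M_0) = λ^N − ∑_{i=1}^{N−1} s_i·λ^{N−i} + (−1)^N. In particular det M_0 = 1. -/
variable {R : Type*} [CommRing R] {n : ℕ}

section Hessenberg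

variable {A : Matrix (Fin (n + 1)) (Fin (n + 1)) R}

lemma adjugate_last_zero_of_hessenberg (hA : ∀ i j : Fin (n + 1), (j : ℕ) + 1 < i → A i j = 0) :
    A.adjugate (Fin.last n) 0 = ∏ i : Fin n, -A i.succ i.castSucc := by
  have hminor : (A.submatrix Fin.succ Fin.castSucc).IsUpperTriangular := fun i j hji =>
    hA i.succ j.castSucc (by simpa using hji)
  simp [Matrix.adjugate_fin_succ_eq_det_submatrix, Matrix.det_of_isUpperTriangular hminor,
    Finset.prod_neg]

lemma det_mul_last_of_hessenberg (hA : ∀ i j : Fin (n + 1), (j : ℕ) + 1 < i → A i j = 0)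
    {x : Fin (n + 1) → R} {c : R} (hx : A.mulVec x = Pi.single 0 c) :
    A.det * x (Fin.last n) = c * ∏ i : Fin n, -A i.succ i.castSucc :=
  calc A.det * x (Fin.last n) = A.adjugate.mulVec (A.mulVec x) (Fin.last n) := by
        simp [Matrix.mulVec_mulVec, Matrix.adjugate_mul, Matrix.smul_mulVec]
    _ = c * ∏ i : Fin n, -A i.succ i.castSucc := by
        simp [hx, Matrix.mulVec_single, adjugate_last_zero_of_hessenberg hA, mul_comm]

end Hessenberg

/-- The nilpotent shift matrix with ones on the subdiagonal: the part of a companion matrix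
that does not depend on the polynomial. -/
def lowerShift (R : Type*) [CommRing R] (n : ℕ) : Matrix (Fin n) (Fin n) R :=
  Matrix.of fun i j => if (i : ℕ) = j + 1 then 1 else 0

lemma lowerShift_mulVec (f : ℕ → R) :
    (lowerShift R (n + 1)).mulVec (fun j => f (j + 1)) =
      (fun i : Fin (n + 1) => f i) - Pi.single 0 (f 0) := by
  funext i
  cases i using Fin.cases with
  | zero => simp [lowerShift, Matrix.mulVec, dotProduct]
  | succ k =>
    rw [Matrix.mulVec, dotProduct, Fintype.sum_eq_single k.castSucc]
    · simp [lowerShift]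
    · intro j hj
      have hkj : (k : ℕ) ≠ j := fun h => hj (Fin.ext h.symm)
      simp [lowerShift, hkj]

section ShiftAdd

variable {U : Matrix (Fin (n + 1)) (Fin (n + 1)) R} {m : ℕ}

/-- When `U` is supported in the rows `≤ m` and the columns `≥ m`, this is the value at `lam` of the
characteristic polynomial of the block of `lowerShift R (n + 1) + U` formed by the rows and columns
`≥ k`. Its values at `k = 1, …, n + 1` are the coordinates of the vector that back-substitution
yields, its value at `k = 0` is what remains in row `0`. -/
def trailingCharValue (U : Matrix (Fin (n + 1)) (Fin (n + 1)) R) (lam : R) (k : ℕ) : R :=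
  lam ^ (n + 1 - k) -
    ∑ i : Fin (n + 1), if k ≤ (i : ℕ) then ∑ j, U i j * lam ^ (n - j + (i - k) : ℕ) else 0

lemma trailingCharValue_of_lt (hU : ∀ i j : Fin (n + 1), U i j ≠ 0 → (i : ℕ) ≤ m ∧ m ≤ j)
    (lam : R) {k : ℕ} (hk : m < k) :
    trailingCharValue U lam k = lam ^ (n + 1 - k) := by
  have hzero (i j : Fin (n + 1)) (hi : k ≤ (i : ℕ)) : U i j = 0 := by
    by_contra h
    have := hU i j h
    omega
  rw [trailingCharValue, Finset.sum_eq_zero, sub_zero]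
  intro i _
  split_ifs with hi
  · exact Finset.sum_eq_zero fun j _ => by rw [hzero i j hi, zero_mul]
  · rfl

lemma mul_trailingCharValue_succ (lam : R) (k : Fin (n + 1)) :
    lam * trailingCharValue U lam (k + 1) =
      trailingCharValue U lam k + ∑ j, U k j * lam ^ (n - j : ℕ) := by
  have hrow (i : Fin (n + 1)) :
      (if (k : ℕ) ≤ i then ∑ j, U i j * lam ^ (n - j + (i - k) : ℕ) else 0) =
        lam * (if (k : ℕ) + 1 ≤ i then ∑ j, U i j * lam ^ (n - j + (i - (k + 1)) : ℕ) else 0) +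
          if i = k then ∑ j, U k j * lam ^ (n - j : ℕ) else 0 := by
    rcases lt_trichotomy i k with hik | rfl | hki
    · have h : ¬ (k : ℕ) ≤ i := by omega
      have h' : ¬ (k : ℕ) + 1 ≤ i := by omega
      simp [h, h', hik.ne]
    · simp
    · have hexp (j : Fin (n + 1)) :
          n - (j : ℕ) + (i - k) = n - j + (i - (k + 1)) + 1 := by omega
      have h : (k : ℕ) ≤ i := by omega
      have h' : (k : ℕ) + 1 ≤ i := by omega
      simp only [if_pos h, if_pos h', if_neg hki.ne', add_zero, Finset.mul_sum, hexp, pow_succ]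
      exact Finset.sum_congr rfl fun j _ => by ring
  have hpow : lam ^ (n + 1 - k : ℕ) = lam * lam ^ (n + 1 - (k + 1) : ℕ) := by
    rw [← pow_succ']
    congr 1
    omega
  simp only [trailingCharValue, hrow, Finset.sum_add_distrib, ← Finset.mul_sum, hpow,
    Finset.sum_ite_eq', Finset.mem_univ, if_true]
  ring

lemma mulVec_trailingCharValue (hU : ∀ i j : Fin (n + 1), U i j ≠ 0 → (i : ℕ) ≤ m ∧ m ≤ j)
    (lam : R) :
    (lam • 1 - (lowerShift R (n + 1) + U)).mulVec (fun j => trailingCharValue U lam (j + 1)) =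
      Pi.single 0 (trailingCharValue U lam 0) := by
  have hUx : U.mulVec (fun j => trailingCharValue U lam (j + 1)) =
      fun i => ∑ j, U i j * lam ^ (n - j : ℕ) := by
    funext i
    rw [Matrix.mulVec, dotProduct]
    refine Finset.sum_congr rfl fun j _ => ?_
    by_cases h : U i j = 0
    · simp [h]
    · rw [trailingCharValue_of_lt hU lam (Nat.lt_succ_of_le (hU i j h).2), Nat.succ_sub_succ]
  funext i
  simp only [Matrix.sub_mulVec, Matrix.add_mulVec, Matrix.smul_mulVec, Matrix.one_mulVec,
    lowerShift_mulVec, hUx, Pi.sub_apply, Pi.add_apply, Pi.smul_apply, smul_eq_mul,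
    mul_trailingCharValue_succ]
  ring

theorem det_smul_one_sub_lowerShift_add
    (hU : ∀ i j : Fin (n + 1), U i j ≠ 0 → (i : ℕ) ≤ m ∧ m ≤ j) (lam : R) :
    (lam • 1 - (lowerShift R (n + 1) + U)).det =
      lam ^ (n + 1) - ∑ i, ∑ j, U i j * lam ^ (n - j + i : ℕ) := by
  set A := lam • 1 - (lowerShift R (n + 1) + U) with hA
  have hbelow (i j : Fin (n + 1)) (hij : j < i) : A i j = -lowerShift R (n + 1) i j := by
    have hUij : U i j = 0 := by
      by_contra h
      have := hU i j h
      omega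
    simp [hA, hUij, hij.ne']
  have hhess (i j : Fin (n + 1)) (hij : (j : ℕ) + 1 < i) : A i j = 0 := by
    simp [hbelow i j (by omega), lowerShift, hij.ne']
  have hsub (i : Fin n) : -A i.succ i.castSucc = 1 := by
    simp [hbelow _ _ i.castSucc_lt_succ, lowerShift]
  have hlast : trailingCharValue U lam (n + 1) = 1 := by
    rw [trailingCharValue, Finset.sum_eq_zero fun i _ => if_neg i.is_lt.not_ge]
    simp
  calc A.det = A.det * trailingCharValue U lam (Fin.last n + 1) := by
        rw [Fin.val_last, hlast, mul_one]
    _ = trailingCharValue U lam 0 * ∏ i : Fin n, -A i.succ i.castSucc :=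
        det_mul_last_of_hessenberg hhess (mulVec_trailingCharValue hU lam)
    _ = lam ^ (n + 1) - ∑ i, ∑ j, U i j * lam ^ (n - j + i : ℕ) := by
        simp [hsub, trailingCharValue]

end ShiftAdd

/-- The staircase of `a 0, …, a n` about the antidiagonal, running from the upper right corner to
the centre of the matrix: `a e` is placed in row `⌈e / 2⌉` and column `n - ⌊e / 2⌋`. The shift
together with this staircase is a companion matrix of `X ^ (n + 1) - ∑ a e * X ^ e`. -/
def zigzag (n : ℕ) (a : ℕ → R) : Matrix (Fin (n + 1)) (Fin (n + 1)) R :=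
  Matrix.of fun i j =>
    if i ≤ j ∧ ((i + j : ℕ) = n ∨ (i + j : ℕ) = n + 1) then a (n - j + i) else 0

lemma le_and_le_of_zigzag_ne_zero {a : ℕ → R} {i j : Fin (n + 1)} (h : zigzag n a i j ≠ 0) :
    (i : ℕ) ≤ (n + 1) / 2 ∧ (n + 1) / 2 ≤ j := by
  have hstair : i ≤ j ∧ ((i + j : ℕ) = n ∨ (i + j : ℕ) = n + 1) := by
    by_contra hij
    exact h (if_neg hij)
  omega

lemma sum_zigzag_mul_pow (a : ℕ → R) (lam : R) :
    ∑ i, ∑ j, zigzag n a i j * lam ^ (n - j + i : ℕ) =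
      ∑ e ∈ Finset.range (n + 1), a e * lam ^ e := by
  let pos (e : Fin (n + 1)) : Fin (n + 1) × Fin (n + 1) :=
    (⟨(e + 1) / 2, by omega⟩, ⟨n - e / 2, by omega⟩)
  have hpos (e : Fin (n + 1)) : n - ((pos e).2 : ℕ) + (pos e).1 = e := by
    simp only [pos]
    omega
  rw [← Fin.sum_univ_eq_sum_range (fun e => a e * lam ^ e), ← Fintype.sum_prod_type', eq_comm]
  refine Fintype.sum_of_injective pos (fun e e' h => ?_) _ _ (fun p hp => ?_) (fun e => ?_)
  · rw [Fin.ext_iff, ← hpos e, ← hpos e', h]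
  · rw [zigzag, Matrix.of_apply, if_neg, zero_mul]
    rintro ⟨hle, hsum⟩
    refine hp ⟨⟨n - p.2 + p.1, by omega⟩, ?_⟩
    ext <;> simp only [pos] <;> omega
  · have hon : (pos e).1 ≤ (pos e).2 ∧
        (((pos e).1 + (pos e).2 : ℕ) = n ∨ ((pos e).1 + (pos e).2 : ℕ) = n + 1) := by
      simp only [pos, Fin.mk_le_mk]
      omega
    rw [zigzag, Matrix.of_apply, if_pos hon, hpos]

theorem monodromy_charpoly_general (n : ℕ) (a : ℕ → R) :
    (∀ lam : R, (lam • 1 - (lowerShift R (n + 1) + zigzag n a)).det =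
      lam ^ (n + 1) - ∑ e ∈ Finset.range (n + 1), a e * lam ^ e) ∧
    (lowerShift R (n + 1) + zigzag n a).det = (-1) ^ n * a 0 := by
  have hchar (lam : R) : (lam • 1 - (lowerShift R (n + 1) + zigzag n a)).det =
      lam ^ (n + 1) - ∑ e ∈ Finset.range (n + 1), a e * lam ^ e := by
    rw [det_smul_one_sub_lowerShift_add fun _ _ => le_and_le_of_zigzag_ne_zero, sum_zigzag_mul_pow]
  refine ⟨hchar, ?_⟩
  calc (lowerShift R (n + 1) + zigzag n a).det
      = (-1) ^ (n + 1) * ((0 : R) • 1 - (lowerShift R (n + 1) + zigzag n a)).det := by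
        rw [zero_smul, zero_sub, Matrix.det_neg, Fintype.card_fin, ← mul_assoc, ← mul_pow]
        simp
    _ = (-1) ^ n * a 0 := by
        rw [hchar]
        simp [Finset.sum_range_succ', pow_succ]

lemma sum_Icc_mul_pow_eq_sum_range (s : ℤ → R) (n : ℕ) (lam : R) :
    ∑ i ∈ Finset.Icc 1 n, s i * lam ^ (n + 1 - i) =
      ∑ e ∈ Finset.range n, s (n - e) * lam ^ (e + 1) := by
  rw [← Finset.Ico_add_one_right_eq_Icc, Finset.sum_Ico_eq_sum_range, ← Finset.sum_range_reflect]
  refine Finset.sum_congr rfl fun e he => ?_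
  rw [Finset.mem_range] at he
  congr 2
  all_goals omega

lemma monodromyMat_eq_lowerShift_add_zigzag (n : ℕ) (s : ℤ → ℂ) :
    MonodromyMat (n + 1) s = lowerShift ℂ (n + 1) +
      zigzag n (Function.update (fun e => s (n + 1 - e)) 0 ((-1) ^ n)) := by
  ext i j
  simp only [MonodromyMat, lowerShift, zigzag, Matrix.add_apply, Matrix.of_apply,
    Function.update_apply, Fin.le_def]
  split_ifs <;> first | omega | (simp; done) | skip
  -- Only the two Stokes entries are left; each of them is `s (j - i + 1)`.
  all_goals
    rw [zero_add]
    congr 1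
    omega

/-- the characteristic polynomial of the explicit monodromy matrix is
`det(λ·I − M_0) = λ^N − ∑_{i=1}^{N−1} s_i λ^{N−i} + (−1)^N`; in particular `det M_0 = 1`. -/
theorem monodromy_charpoly
    (N : ℕ) (hN : 2 ≤ N) (s : ℤ → ℂ) :
    (∀ lam : ℂ,
      (lam • (1 : Matrix (Fin N) (Fin N) ℂ) - MonodromyMat N s).det =
        lam ^ N - (∑ i ∈ Finset.Icc 1 (N - 1), s (i : ℤ) * lam ^ (N - i)) + (-1 : ℂ) ^ N) ∧
    (MonodromyMat N s).det = 1 := by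
  obtain ⟨n, rfl⟩ : ∃ n, N = n + 1 := ⟨N - 1, by omega⟩
  rw [monodromyMat_eq_lowerShift_add_zigzag]
  obtain ⟨hchar, hdet⟩ := monodromy_charpoly_general n
    (Function.update (fun e : ℕ => s (n + 1 - e)) 0 ((-1) ^ n))
  refine ⟨fun lam => ?_, ?_⟩
  · rw [hchar, Finset.sum_range_succ', Nat.add_sub_cancel, sum_Icc_mul_pow_eq_sum_range]
    simp only [Function.update_of_ne (Nat.add_one_ne_zero _), Function.update_self, Nat.cast_add,
      Nat.cast_one, add_sub_add_right_eq_sub]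
    ring
  · rw [hdet, Function.update_self, ← mul_pow]
    simp
end

section
/- Let N ≥ 2 be an integer, let s_1,…,s_{N−1} ∈ ℂ, and let Σ_1,…,Σ_N ∈ ℂ. If the characteristic polynomial of the explicit monodromy matrix M_0 factors as det(λ·I − M_0) = ∏_{j=1}^N (λ − Σ_j), then s_i = (−1)^{i+1}·e_i(Σ_1,…,Σ_N) for every i = 1,…,N−1, and ∏_{j=1}^N Σ_j = 1, where e_i denotes the elementary symmetric polynomial of degree i in N variables. -/
open Matrix Polynomial

section Hessenberg

/-- Upper Hessenberg matrices: all entries below the first subdiagonal vanish. -/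
def IsUpperHessenberg {R : Type*} [Zero R] {n : ℕ} (A : Matrix (Fin n) (Fin n) R) : Prop :=
  ∀ ⦃i j : Fin n⦄, (j : ℕ) + 1 < i → A i j = 0

variable {R : Type*} [CommRing R] {n : ℕ}

namespace IsUpperHessenberg

lemma charmatrix {A : Matrix (Fin n) (Fin n) R} (hA : IsUpperHessenberg A) :
    IsUpperHessenberg A.charmatrix := by
  intro i j hij
  have hne : i ≠ j := by rintro rfl; omega
  rw [charmatrix_apply_ne _ _ _ hne, hA hij, map_zero, neg_zero]

variable {A : Matrix (Fin (n + 1)) (Fin (n + 1)) R}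

lemma det_submatrix_succ_castSucc (hA : IsUpperHessenberg A) :
    (A.submatrix Fin.succ Fin.castSucc).det = ∏ i : Fin n, A i.succ i.castSucc := by
  refine det_of_isUpperTriangular fun i j hij => hA ?_
  simpa using hij

lemma adjugate_last_zero (hA : IsUpperHessenberg A) :
    A.adjugate (Fin.last n) 0 = ∏ i : Fin n, -A i.succ i.castSucc := by
  rw [adjugate_fin_succ_eq_det_submatrix, Fin.succAbove_last]
  simp [Fin.succAbove_zero, hA.det_submatrix_succ_castSucc, Finset.prod_neg]

lemma apply_last_mul_det (hA : IsUpperHessenberg A) {v : Fin (n + 1) → R} {p : R}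
    (hv : A *ᵥ v = Pi.single 0 p) :
    v (Fin.last n) * A.det = p * ∏ i : Fin n, -A i.succ i.castSucc := by
  have cramer : A.det • v = A.adjugate *ᵥ Pi.single 0 p := by
    rw [← hv, mulVec_mulVec, adjugate_mul, smul_mulVec, one_mulVec]
  have hlast := congrFun cramer (Fin.last n)
  rw [mulVec_single, Pi.smul_apply, Pi.smul_apply, col_apply, hA.adjugate_last_zero] at hlast
  simpa only [smul_eq_mul, MulOpposite.smul_eq_mul_unop, MulOpposite.unop_op, mul_comm] using hlast

lemma apply_last_mul_charpoly (hA : IsUpperHessenberg A) {v : Fin (n + 1) → R[X]} {p : R[X]}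
    (hv : A.charmatrix *ᵥ v = Pi.single 0 p) :
    v (Fin.last n) * A.charpoly = p * ∏ i : Fin n, C (A i.succ i.castSucc) := by
  rw [charpoly, hA.charmatrix.apply_last_mul_det hv]
  simp [charmatrix_apply_ne, Fin.castSucc_lt_succ.ne']

end IsUpperHessenberg

end Hessenberg

lemma charmatrix_mulVec_apply {ι R : Type*} [Fintype ι] [DecidableEq ι] [CommRing R]
    (M : Matrix ι ι R) (v : ι → R[X]) (i : ι) :
    (M.charmatrix *ᵥ v) i = X * v i - ∑ j, C (M i j) * v j := by
  rw [charmatrix, sub_mulVec, Pi.sub_apply, scalar_apply, mulVec_diagonal]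
  rfl

lemma sum_C_single_mul {ι R : Type*} [Fintype ι] [DecidableEq ι] [Semiring R]
    (k : ι) (a : R) (v : ι → R[X]) :
    ∑ j, C ((Pi.single k a : ι → R) j) * v j = C a * v k := by
  simp only [Pi.single_apply, apply_ite C, C_0, ite_mul, zero_mul, Finset.sum_ite_eq',
    Finset.mem_univ, if_true]

section Horner

variable {R : Type*} [CommRing R]

/-- The Horner scheme `X ^ m - s₁ X ^ (m - 1) - ⋯ - s_m`, with the sequence
`s` indexed from `1`. -/
noncomputable def hornerPoly (s : ℕ → R) : ℕ → R[X]
  | 0 => 1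
  | m + 1 => X * hornerPoly s m - C (s (m + 1))

lemma coeff_hornerPoly (s : ℕ → R) (j k : ℕ) :
    (hornerPoly s (j + (k + 1))).coeff j = -s (k + 1) := by
  induction j with
  | zero => simp [hornerPoly]
  | succ j ih => rw [show j + 1 + (k + 1) = j + (k + 1) + 1 by omega, hornerPoly, coeff_sub,
      coeff_X_mul, ih, coeff_C_succ, sub_zero]

/-- The vector with last entry `1` which `X - M₀`, of size `n + 1`, maps to a multiple of `e₀`; the
indices are natural numbers, of which only those up to `n` matter. Truncated subtraction makes the
entries in the lower half pure powers of `X`. -/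
noncomputable def hornerVec (s : ℕ → R) (n i : ℕ) : R[X] :=
  X ^ min i (n - i) * hornerPoly s (n - 2 * i)

lemma hornerVec_of_two_mul_le (s : ℕ → R) {n i : ℕ} (hi : 2 * i ≤ n) :
    hornerVec s n i = X ^ i * hornerPoly s (n - 2 * i) := by
  rw [hornerVec, min_eq_left (by omega)]

lemma hornerVec_of_le_two_mul (s : ℕ → R) {n i : ℕ} (hi : n ≤ 2 * i) :
    hornerVec s n i = X ^ (n - i) := by
  rw [hornerVec, Nat.sub_eq_zero_of_le hi, hornerPoly, mul_one, min_eq_right (by omega)]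

lemma hornerVec_sub (s : ℕ → R) {n j : ℕ} (hj : 2 * j ≤ n) : hornerVec s n (n - j) = X ^ j := by
  rw [hornerVec_of_le_two_mul s (by omega), Nat.sub_sub_self (by omega)]

lemma hornerVec_zero (s : ℕ → R) (n : ℕ) : hornerVec s n 0 = hornerPoly s n := by
  rw [hornerVec_of_two_mul_le s (Nat.zero_le n), pow_zero, one_mul, mul_zero, Nat.sub_zero]

lemma hornerVec_self (s : ℕ → R) (n : ℕ) : hornerVec s n n = 1 := by
  rw [hornerVec_of_le_two_mul s (by omega), Nat.sub_self, pow_zero]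

lemma X_mul_hornerVec_succ (s : ℕ → R) {n i : ℕ} (hi : i < n) :
    X * hornerVec s n (i + 1) = hornerVec s n i
      + C (if 2 * i + 1 < n then s (n - (2 * i + 1)) else 0) * hornerVec s n (n - (i + 1))
      + C (if 2 * i < n then s (n - 2 * i) else 0) * hornerVec s n (n - i) := by
  rcases lt_trichotomy (2 * i + 1) n with hupper | hmiddle | hlower
  · obtain ⟨m, hm⟩ : ∃ m, n - 2 * i = m + 2 := Nat.exists_eq_add_of_le' (by omega)
    have hsucc : hornerVec s n (i + 1) = X ^ (i + 1) * hornerPoly s m := by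
      rw [hornerVec_of_two_mul_le s (by omega), show n - 2 * (i + 1) = m by omega]
    have hself : hornerVec s n i =
        X ^ i * (X * (X * hornerPoly s m - C (s (m + 1))) - C (s (m + 2))) := by
      rw [hornerVec_of_two_mul_le s (by omega), hm, hornerPoly, hornerPoly]
    rw [hsucc, hself, if_pos hupper, if_pos (by omega), hornerVec_sub s (by omega),
      hornerVec_sub s (by omega), hm, show n - (2 * i + 1) = m + 1 by omega]
    ring
  · subst hmiddle
    have hsucc : hornerVec s (2 * i + 1) (i + 1) = X ^ i := by
      rw [hornerVec_of_le_two_mul s (by omega), show 2 * i + 1 - (i + 1) = i by omega]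
    have hself : hornerVec s (2 * i + 1) i = X ^ i * (X * 1 - C (s 1)) := by
      rw [hornerVec_of_two_mul_le s (by omega), Nat.add_sub_cancel_left, hornerPoly, hornerPoly]
    rw [hsucc, hself, if_neg (lt_irrefl _), if_pos (by omega), C_0, zero_mul,
      hornerVec_sub s (by omega), Nat.add_sub_cancel_left]
    ring
  · rw [hornerVec_of_le_two_mul s (by omega : n ≤ 2 * (i + 1)),
      hornerVec_of_le_two_mul s (by omega : n ≤ 2 * i), if_neg (by omega), if_neg (by omega),
      C_0, zero_mul, zero_mul, add_zero, add_zero, ← pow_succ',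
      show n - (i + 1) + 1 = n - i by omega]

end Horner

section Monodromy

variable (n : ℕ) (s : ℤ → ℂ)

lemma isUpperHessenberg_monodromyMat (N : ℕ) : IsUpperHessenberg (MonodromyMat N s) := by
  intro i j hij
  simp only [MonodromyMat, of_apply]
  split_ifs <;> first | rfl | omega

lemma monodromyMat_zero : MonodromyMat (n + 1) s 0 = Pi.single (Fin.last n) ((-1) ^ n) := by
  ext j
  have hj : j = Fin.last n ↔ (j : ℕ) = n := Fin.ext_iff
  simp [MonodromyMat, Pi.single_apply, hj]

lemma monodromyMat_succ (i : Fin n) :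
    MonodromyMat (n + 1) s i.succ = Pi.single i.castSucc 1
      + Pi.single i.rev.castSucc (if 2 * (i : ℕ) + 1 < n then s (n - (2 * i + 1) : ℕ) else 0)
      + Pi.single i.rev.succ (if 2 * (i : ℕ) < n then s (n - 2 * i : ℕ) else 0) := by
  have hcast_rev : 2 * (i : ℕ) + 1 < n →
      ((n + 1 : ℕ) : ℤ) - 2 * ((i + 1 : ℕ) : ℤ) = (n - (2 * i + 1) : ℕ) := by omega
  have hcast_rev_succ : 2 * (i : ℕ) < n →
      ((n + 1 : ℕ) : ℤ) - 2 * ((i + 1 : ℕ) : ℤ) + 1 = (n - 2 * i : ℕ) := by omega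
  ext j
  simp only [MonodromyMat, of_apply, Pi.add_apply, Pi.single_apply, Fin.ext_iff, Fin.val_succ,
    Fin.val_castSucc, Fin.val_rev]
  split_ifs <;> first | omega | simp_all

lemma monodromyMat_succ_castSucc (i : Fin n) :
    MonodromyMat (n + 1) s i.succ i.castSucc = 1 := by
  simp [MonodromyMat]

lemma charmatrix_monodromyMat_mulVec_hornerVec :
    (MonodromyMat (n + 1) s).charmatrix *ᵥ (fun j => hornerVec (fun k => s k) n j) =
      Pi.single 0 (X * hornerPoly (fun k => s k) n + C ((-1) ^ (n + 1))) := by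
  ext1 i
  rw [charmatrix_mulVec_apply]
  cases i using Fin.cases with
  | zero =>
    rw [monodromyMat_zero, sum_C_single_mul, Fin.val_zero, hornerVec_zero, Fin.val_last,
      hornerVec_self, Pi.single_eq_same, mul_one, pow_succ, mul_neg_one, C_neg, sub_eq_add_neg]
  | succ i =>
    have hrev_succ : (i.rev.succ : ℕ) = n - i := by rw [Fin.val_succ, Fin.val_rev]; omega
    rw [Pi.single_eq_of_ne i.succ_ne_zero, sub_eq_zero, Fin.val_succ,
      X_mul_hornerVec_succ _ i.isLt, monodromyMat_succ]
    simp only [Pi.add_apply, C_add, add_mul, Finset.sum_add_distrib, sum_C_single_mul, C_1,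
      one_mul, Fin.val_castSucc, Fin.val_rev, hrev_succ]

lemma charpoly_monodromyMat :
    (MonodromyMat (n + 1) s).charpoly =
      X * hornerPoly (fun k => s k) n + C ((-1) ^ (n + 1)) := by
  have h := (isUpperHessenberg_monodromyMat s (n + 1)).apply_last_mul_charpoly
    (charmatrix_monodromyMat_mulVec_hornerVec n s)
  simpa only [Fin.val_last, hornerVec_self, monodromyMat_succ_castSucc, map_one,
    Finset.prod_const_one, one_mul, mul_one] using h

variable {n}

lemma coeff_charpoly_monodromyMat {i : ℕ} (hi : 1 ≤ i) (hin : i ≤ n) :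
    (MonodromyMat (n + 1) s).charpoly.coeff (n + 1 - i) = -s i := by
  obtain ⟨k, rfl⟩ := Nat.exists_eq_add_of_le' hi
  obtain ⟨j, rfl⟩ := Nat.exists_eq_add_of_le' hin
  rw [charpoly_monodromyMat, show j + (k + 1) + 1 - (k + 1) = j + 1 by omega, coeff_add,
    coeff_X_mul, coeff_C_succ, add_zero, coeff_hornerPoly]

lemma coeff_zero_charpoly_monodromyMat :
    (MonodromyMat (n + 1) s).charpoly.coeff 0 = (-1) ^ (n + 1) := by
  rw [charpoly_monodromyMat, coeff_add, coeff_X_mul_zero, coeff_C_zero, zero_add]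

end Monodromy

lemma coeff_prod_X_sub_C {ι R : Type*} [CommRing R] (t : Finset ι) (r : ι → R) {k : ℕ}
    (hk : k ≤ t.card) :
    (∏ j ∈ t, (X - C (r j))).coeff (t.card - k) =
      (-1) ^ k * ∑ S ∈ t.powersetCard k, ∏ j ∈ S, r j := by
  simp_rw [sub_eq_add_neg, ← C_neg]
  rw [Finset.prod_X_add_C_coeff t _ (Nat.sub_le _ _), Nat.sub_sub_self hk, Finset.mul_sum]
  refine Finset.sum_congr rfl fun S hS => ?_
  rw [Finset.prod_neg, (Finset.mem_powersetCard.mp hS).2]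

lemma charpoly_eq_of_forall_det_eq {ι K : Type*} [Fintype ι] [DecidableEq ι] [CommRing K]
    [IsDomain K] [Infinite K] {M : Matrix ι ι K} {p : K[X]}
    (h : ∀ x, (x • (1 : Matrix ι ι K) - M).det = p.eval x) : M.charpoly = p := by
  refine Polynomial.funext fun x => ?_
  rw [eval_charpoly, ← h, smul_one_eq_diagonal, scalar_apply]

/-- if the characteristic polynomial of `M_0` factors as
`∏_{j=1}^N (λ − Σ_j)`, then the Stokes constants are the (signed) elementary symmetric
polynomials of the monodromy eigenvalues, `s_i = (−1)^{i+1} e_i(Σ)`, and `∏_j Σ_j = 1`. -/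
theorem stokes_constants_from_monodromy_eigenvalues
    (N : ℕ) (hN : 2 ≤ N) (s : ℤ → ℂ) (Sig : Fin N → ℂ)
    (hfac : ∀ lam : ℂ,
      (lam • (1 : Matrix (Fin N) (Fin N) ℂ) - MonodromyMat N s).det =
        ∏ j, (lam - Sig j)) :
    (∀ i : ℕ, 1 ≤ i → i ≤ N - 1 →
      s (i : ℤ) = (-1 : ℂ) ^ (i + 1) *
        ∑ S ∈ Finset.powersetCard i (Finset.univ : Finset (Fin N)), ∏ j ∈ S, Sig j) ∧
    ∏ j, Sig j = 1 := by
  obtain ⟨n, rfl⟩ : ∃ n, N = n + 1 := Nat.exists_eq_add_of_le' (by omega)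
  have hchar : (MonodromyMat (n + 1) s).charpoly = ∏ j, (X - C (Sig j)) :=
    charpoly_eq_of_forall_det_eq fun lam => by simp [hfac, eval_prod]
  have vieta : ∀ k ≤ n + 1, (MonodromyMat (n + 1) s).charpoly.coeff (n + 1 - k) = (-1) ^ k *
      ∑ S ∈ Finset.powersetCard k (Finset.univ : Finset (Fin (n + 1))), ∏ j ∈ S, Sig j := by
    simpa [hchar] using fun k => coeff_prod_X_sub_C Finset.univ Sig (k := k)
  constructor
  · intro i hi hin
    rw [pow_succ, mul_neg_one, neg_mul, ← vieta i (by omega),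
      coeff_charpoly_monodromyMat s hi (by omega), neg_neg]
  · have hzero := coeff_zero_charpoly_monodromyMat (n := n) s
    simp only [hchar, coeff_zero_prod, coeff_sub, coeff_X_zero, coeff_C_zero, zero_sub,
      Finset.prod_neg, Finset.card_univ, Fintype.card_fin] at hzero
    exact (mul_eq_left₀ (pow_ne_zero _ (by norm_num))).mp hzero
end
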